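/- arXiv:2406.03955 — 6 statements merged into one kernel-verified Lean document; each statement's English description precedes it below -/
import Mathlib

section
/- Let K be a field, O = K[x_1,…,x_n] the polynomial ring, and let φ_1,…,φ_k ∈ O be monic monomials of positive degree, say φ_i = x^{a_i} with exponent vector a_i : {1,…,n} → ℕ, a_i ≠ 0. If φ_1,…,φ_k is not a regular sequence, then there exist distinct indices i, j ∈ {1,…,k} and a variable index v with a_i(v) > 0 and a_j(v) > 0; equivalently, lcm(φ_i,φ_j) = x^{max(a_i,a_j)} (pointwise maximum of exponents) is not equal to the product φ_i·φ_j. -/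
/-! Membership in a monomial ideal is read off exponents: a polynomial lies in the ideal iff each of
its exponents dominates that of a generator. If `x ^ s` shares no variable with any generator
`x ^ t`, then `t ≤ s + m` already forces `t ≤ m`, so multiplication by `x ^ s` cannot bring a
polynomial into the ideal. Hence a zero divisor `φ_i` modulo its predecessors shares a variable
with one of them.
-/

section Exponents

variable {σ M : Type*} [AddCommMonoid M] [LinearOrder M] [CanonicallyOrderedAdd M]

theorem finsupp_not_disjoint_iff_exists_pos {s t : σ →₀ M} :
    ¬ Disjoint s t ↔ ∃ v, 0 < s v ∧ 0 < t v := by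
  simp only [Finsupp.disjoint_iff, Finset.not_disjoint_iff, Finsupp.mem_support_iff,
    pos_iff_ne_zero]

theorem finsupp_disjoint_iff_forall_eq_zero_or {s t : σ →₀ M} :
    Disjoint s t ↔ ∀ v, s v = 0 ∨ t v = 0 := by
  rw [← not_iff_not, finsupp_not_disjoint_iff_exists_pos]
  simp only [not_forall, not_or, pos_iff_ne_zero, ne_eq]

theorem finsupp_le_of_le_add_of_disjoint {s t m : σ →₀ M} (hle : t ≤ s + m)
    (hst : Disjoint s t) : t ≤ m := by
  intro v
  obtain hs | ht := finsupp_disjoint_iff_forall_eq_zero_or.1 hst v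
  · simpa only [Finsupp.add_apply, hs, zero_add] using hle v
  · exact ht ▸ zero_le

theorem max_eq_add_iff_eq_zero_or [IsCancelAdd M] {x y : M} :
    max x y = x + y ↔ x = 0 ∨ y = 0 := by
  constructor
  · intro h
    obtain hmax | hmax := max_choice x y
    · exact .inr (left_eq_add.1 (hmax.symm.trans h))
    · exact .inl (right_eq_add.1 (hmax.symm.trans h))
  · rintro (rfl | rfl) <;> simp

theorem finsupp_sup_eq_add_iff_disjoint [IsCancelAdd M] {s t : σ →₀ M} :
    s ⊔ t = s + t ↔ Disjoint s t := by
  simp only [finsupp_disjoint_iff_forall_eq_zero_or, DFunLike.ext_iff, Finsupp.sup_apply,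
    Finsupp.add_apply, max_eq_add_iff_eq_zero_or]

end Exponents

section Monomials

open MvPolynomial

variable {σ R : Type*} [CommSemiring R]

theorem monomial_sup_eq_mul_iff_disjoint [Nontrivial R] {s t : σ →₀ ℕ} :
    monomial (s ⊔ t) (1 : R) = monomial s 1 * monomial t 1 ↔ Disjoint s t := by
  rw [monomial_mul, one_mul, (monomial_left_injective one_ne_zero).eq_iff,
    finsupp_sup_eq_add_iff_disjoint]

theorem mem_span_monomial_of_monomial_mul_mem {S : Set (σ →₀ ℕ)} {s : σ →₀ ℕ}
    (hS : ∀ t ∈ S, Disjoint s t) {p : MvPolynomial σ R}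
    (hp : monomial s 1 * p ∈ Ideal.span ((fun t ↦ monomial t (1 : R)) '' S)) :
    p ∈ Ideal.span ((fun t ↦ monomial t (1 : R)) '' S) := by
  rw [mem_ideal_span_monomial_image] at hp ⊢
  intro m hm
  have hsm : s + m ∈ (monomial s 1 * p).support := by
    rwa [mem_support_iff, coeff_monomial_mul, one_mul, ← mem_support_iff]
  obtain ⟨t, ht, hle⟩ := hp (s + m) hsm
  exact ⟨t, ht, finsupp_le_of_le_add_of_disjoint hle (hS t ht)⟩

theorem stmt_0_general [Nontrivial R] {ι : Type*} [Preorder ι] (a : ι → σ →₀ ℕ)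
    (hreg : ¬ ∀ i, ∀ x : MvPolynomial σ R,
      monomial (a i) 1 * x ∈ Ideal.span {p | ∃ j, j < i ∧ p = monomial (a j) (1 : R)} →
        x ∈ Ideal.span {p | ∃ j, j < i ∧ p = monomial (a j) (1 : R)}) :
    ∃ i j, j < i ∧ (∃ v, 0 < a i v ∧ 0 < a j v) ∧
      monomial (a i ⊔ a j) (1 : R) ≠ monomial (a i) 1 * monomial (a j) 1 := by
  push Not at hreg
  obtain ⟨i, x, hmul, hx⟩ := hreg
  have hgens : {p | ∃ j, j < i ∧ p = monomial (a j) (1 : R)} =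
      (fun t ↦ monomial t (1 : R)) '' (a '' Set.Iio i) := by
    ext p
    simp only [Set.image_image, Set.mem_image, Set.mem_Iio, Set.mem_ofPred_eq, eq_comm]
  rw [hgens] at hmul hx
  obtain ⟨j, hji, hij⟩ : ∃ j, j < i ∧ ¬ Disjoint (a i) (a j) := by
    by_contra! hdisj
    exact hx (mem_span_monomial_of_monomial_mul_mem (Set.forall_mem_image.2 hdisj) hmul)
  exact ⟨i, j, hji, finsupp_not_disjoint_iff_exists_pos.1 hij,
    mt monomial_sup_eq_mul_iff_disjoint.1 hij⟩

end Monomials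

/-- Lemma 5.7.
`O = K[x_1,…,x_n]`, `φ_i = x^{a i}` monic monomials of positive degree.
"Regular sequence" (as in the paper): for every `i`, the image of `φ_i` is a
non-zero-divisor in `O / ⟨φ_j : j < i⟩` (for `i = 0` this says `φ_0` is a
non-zero-divisor in `O`).  If `φ_1, …, φ_k` is *not* a regular sequence, then
there are distinct indices `i ≠ j` and a variable `v` occurring in both `φ_i`
and `φ_j`; equivalently `lcm(φ_i, φ_j) ≠ φ_i · φ_j`. -/
theorem stmt_0 {K : Type*} [Field K] (n k : ℕ)
    (a : Fin k → (Fin n →₀ ℕ)) (ha : ∀ i, a i ≠ 0)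
    (hreg : ¬ (∀ i : Fin k, ∀ x : MvPolynomial (Fin n) K,
        MvPolynomial.monomial (a i) (1 : K) * x ∈
          Ideal.span {p : MvPolynomial (Fin n) K |
            ∃ j : Fin k, j < i ∧ p = MvPolynomial.monomial (a j) (1 : K)} →
        x ∈ Ideal.span {p : MvPolynomial (Fin n) K |
            ∃ j : Fin k, j < i ∧ p = MvPolynomial.monomial (a j) (1 : K)})) :
    ∃ i j : Fin k, i ≠ j ∧ (∃ v : Fin n, 0 < a i v ∧ 0 < a j v) ∧
      MvPolynomial.monomial (a i ⊔ a j) (1 : K) ≠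
        MvPolynomial.monomial (a i) (1 : K) * MvPolynomial.monomial (a j) (1 : K) := by
  obtain ⟨i, j, hji, hshared⟩ := stmt_0_general a hreg
  exact ⟨i, j, hji.ne', hshared⟩
end

section
/- The Taylor product is associative: for all subsets ρ, σ, τ ⊆ {1,…,k}, (e_ρ ⋆ e_σ) ⋆ e_τ = e_ρ ⋆ (e_σ ⋆ e_τ) in C (hence, by O-bilinearity, ⋆ is an associative product on C). -/
/-- `A_τ`: the pointwise maximum of the exponent vectors `a i`, `i ∈ τ`
(so that `m_τ = x^{A_τ}` is the lcm of the monomials `φ_i = x^{a i}`, `i ∈ τ`). -/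
def texp {n k : ℕ} (a : Fin k → Fin n → ℕ) (τ : Finset (Fin k)) : Fin n → ℕ :=
  fun v => τ.sup fun i => a i v

/-- the monic monomial `x^f` with exponent vector `f`. -/
noncomputable def monOf (K : Type*) [Field K] {n : ℕ} (f : Fin n → ℕ) :
    MvPolynomial (Fin n) K :=
  MvPolynomial.monomial (Finsupp.equivFunOnFinite.symm f) 1

/-- the Taylor product on basis elements:
`e_σ ⋆ e_τ = (−1)^{card{(i,j)∈σ×τ : i>j}} (m_σ m_τ / m_{σ∪τ}) e_{σ∪τ}` if
`σ ∩ τ = ∅`, and `0` otherwise. -/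
noncomputable def taylorStarBasis (K : Type*) [Field K] {n k : ℕ}
    (a : Fin k → Fin n → ℕ) (σ τ : Finset (Fin k)) :
    Finset (Fin k) →₀ MvPolynomial (Fin n) K :=
  if σ ∩ τ = ∅ then
    ((-1 : MvPolynomial (Fin n) K) ^ ((σ ×ˢ τ).filter fun p => p.2 < p.1).card *
        monOf K fun v => texp a σ v + texp a τ v - texp a (σ ∪ τ) v) •
      Finsupp.single (σ ∪ τ) 1
  else 0

/-- the Taylor product, extended `O`-bilinearly. -/
noncomputable def taylorStar (K : Type*) [Field K] {n k : ℕ} (a : Fin k → Fin n → ℕ) :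
    (Finset (Fin k) →₀ MvPolynomial (Fin n) K) →ₗ[MvPolynomial (Fin n) K]
      (Finset (Fin k) →₀ MvPolynomial (Fin n) K) →ₗ[MvPolynomial (Fin n) K]
        (Finset (Fin k) →₀ MvPolynomial (Fin n) K) :=
  Finsupp.lsum (MvPolynomial (Fin n) K) fun σ =>
    LinearMap.toSpanSingleton (MvPolynomial (Fin n) K) _
      (Finsupp.lsum (MvPolynomial (Fin n) K) fun τ =>
        LinearMap.toSpanSingleton (MvPolynomial (Fin n) K) _ (taylorStarBasis K a σ τ))

/-!
Writing `e_σ ⋆ e_τ = c(σ, τ) e_{σ ∪ τ}`, associativity of `⋆` says that the coefficient `c` is a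
2-cocycle on the monoid of subsets under union. Its three factors are cocycles separately: the
condition that `σ` and `τ` be disjoint; the number of inversions, which is additive over disjoint
unions in each argument; and the exponent `A_σ + A_τ - A_{σ ∪ τ}`, which is the coboundary of `A`.
The truncated subtraction in the exponent is harmless because `A_{σ ∪ τ} ≤ A_σ + A_τ`.
-/

theorem disjoint_and_disjoint_sup_assoc {α : Type*} [DistribLattice α] [OrderBot α]
    {x y z : α} :
    Disjoint x y ∧ Disjoint (x ⊔ y) z ↔ Disjoint y z ∧ Disjoint x (y ⊔ z) := by
  rw [disjoint_sup_left, disjoint_sup_right]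
  tauto

section Interedges

open Finset Rel

variable {α β : Type*}

theorem card_interedges_union_left [DecidableEq α] (r : α → β → Prop) [∀ x, DecidablePred (r x)]
    {s s' : Finset α} (hs : Disjoint s s') (t : Finset β) :
    #(interedges r (s ∪ s') t) = #(interedges r s t) + #(interedges r s' t) := by
  classical
  rw [← card_union_of_disjoint (interedges_disjoint_left r hs t)]
  simp only [interedges, union_product, filter_union]

theorem card_interedges_union_right [DecidableEq β] (r : α → β → Prop) [∀ x, DecidablePred (r x)]
    (s : Finset α) {t t' : Finset β} (ht : Disjoint t t') :
    #(interedges r s (t ∪ t')) = #(interedges r s t) + #(interedges r s t') := by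
  classical
  rw [← card_union_of_disjoint (interedges_disjoint_right r s ht)]
  simp only [interedges, product_union, filter_union]

theorem card_interedges_cocycle [DecidableEq α] (r : α → α → Prop) [∀ x, DecidablePred (r x)]
    {s t u : Finset α} (hst : Disjoint s t) (htu : Disjoint t u) :
    #(interedges r s t) + #(interedges r (s ∪ t) u) =
      #(interedges r t u) + #(interedges r s (t ∪ u)) := by
  rw [card_interedges_union_left r hst, card_interedges_union_right r s htu]
  ac_rfl

end Interedges

section Subadditive

variable {α M : Type*} [SemilatticeSup α] [AddCommMonoid M] [PartialOrder M] [ExistsAddOfLE M]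
  [AddLeftMono M] [AddLeftReflectLE M] [Sub M] [OrderedSub M]

theorem add_tsub_sup_cocycle {f : α → M} (hf : ∀ x y, f (x ⊔ y) ≤ f x + f y) (x y z : α) :
    (f x + f y - f (x ⊔ y)) + (f (x ⊔ y) + f z - f (x ⊔ y ⊔ z)) =
      (f y + f z - f (y ⊔ z)) + (f x + f (y ⊔ z) - f (x ⊔ (y ⊔ z))) := by
  have left_eq : (f x + f y - f (x ⊔ y)) + (f (x ⊔ y) + f z - f (x ⊔ y ⊔ z)) =
      f x + f y + f z - f (x ⊔ y ⊔ z) := by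
    rw [tsub_add_tsub_comm (hf x y) (hf _ z), add_left_comm, add_tsub_add_eq_tsub_left]
  have right_eq : (f y + f z - f (y ⊔ z)) + (f x + f (y ⊔ z) - f (x ⊔ (y ⊔ z))) =
      f y + f z + f x - f (x ⊔ (y ⊔ z)) := by
    rw [add_comm (f x) (f (y ⊔ z)),
      tsub_add_tsub_comm (hf y z) ((hf x _).trans_eq (add_comm _ _)), add_left_comm,
      add_tsub_add_eq_tsub_left]
  rw [left_eq, right_eq, sup_assoc, add_rotate]

end Subadditive

theorem monOf_mul_monOf (K : Type*) [Field K] {n : ℕ} (f g : Fin n → ℕ) :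
    monOf K f * monOf K g = monOf K (f + g) := by
  rw [monOf, monOf, MvPolynomial.monomial_mul, one_mul]
  exact congrArg (MvPolynomial.monomial · 1) (Finsupp.ext fun _ => rfl)

section Taylor

open Finset Rel

variable (K : Type*) [Field K] {n k : ℕ} (a : Fin k → Fin n → ℕ)

theorem texp_union (σ τ : Finset (Fin k)) : texp a (σ ∪ τ) = texp a σ ⊔ texp a τ :=
  funext fun _ => sup_union

theorem texp_union_le_add (σ τ : Finset (Fin k)) : texp a (σ ∪ τ) ≤ texp a σ + texp a τ := by
  rw [texp_union]
  exact sup_le (le_add_of_nonneg_right zero_le) (le_add_of_nonneg_left zero_le)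

/-- The structure constant `c(σ, τ)` in `e_σ ⋆ e_τ = c(σ, τ) e_{σ ∪ τ}`, zero when `σ` and `τ`
meet. The sign counts the inversions between `σ` and `τ` as edges of the relation `>`. -/
noncomputable def taylorCoeff (σ τ : Finset (Fin k)) : MvPolynomial (Fin n) K :=
  if Disjoint σ τ then
    (-1) ^ #(interedges (· > ·) σ τ) * monOf K (texp a σ + texp a τ - texp a (σ ∪ τ))
  else 0

theorem taylorCoeff_cocycle (ρ σ τ : Finset (Fin k)) :
    taylorCoeff K a ρ σ * taylorCoeff K a (ρ ∪ σ) τ =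
      taylorCoeff K a σ τ * taylorCoeff K a ρ (σ ∪ τ) := by
  have disjoint_iff : Disjoint ρ σ ∧ Disjoint (ρ ∪ σ) τ ↔ Disjoint σ τ ∧ Disjoint ρ (σ ∪ τ) :=
    disjoint_and_disjoint_sup_assoc
  simp only [taylorCoeff, ite_zero_mul_ite_zero, disjoint_iff]
  refine if_ctx_congr Iff.rfl (fun h => ?_) fun _ => rfl
  obtain ⟨hρσ, -⟩ := disjoint_iff.mpr h
  have exponent_eq := add_tsub_sup_cocycle (texp_union_le_add a) ρ σ τ
  simp only [sup_eq_union] at exponent_eq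
  rw [mul_mul_mul_comm, ← pow_add, monOf_mul_monOf, card_interedges_cocycle _ hρσ h.1,
    exponent_eq, pow_add, ← monOf_mul_monOf, mul_mul_mul_comm]

theorem taylorStarBasis_eq_single (σ τ : Finset (Fin k)) :
    taylorStarBasis K a σ τ = Finsupp.single (σ ∪ τ) (taylorCoeff K a σ τ) := by
  simp only [taylorStarBasis, taylorCoeff, ← disjoint_iff_inter_eq_empty]
  split_ifs
  · exact Finsupp.smul_single_one _ _
  · exact Finsupp.single_zero _ |>.symm

theorem taylorStar_single_single (σ τ : Finset (Fin k)) (p q : MvPolynomial (Fin n) K) :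
    taylorStar K a (Finsupp.single σ p) (Finsupp.single τ q) =
      Finsupp.single (σ ∪ τ) (p * q * taylorCoeff K a σ τ) := by
  simp only [taylorStar, Finsupp.lsum_single, LinearMap.toSpanSingleton_apply,
    LinearMap.smul_apply, taylorStarBasis_eq_single, Finsupp.smul_single, smul_eq_mul, mul_assoc]

theorem stmt_3_general (x y z : Finset (Fin k) →₀ MvPolynomial (Fin n) K) :
    taylorStar K a (taylorStar K a x y) z = taylorStar K a x (taylorStar K a y z) := by
  induction x using Finsupp.induction_linear with
  | zero => simp only [map_zero, LinearMap.zero_apply]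
  | add x x' hx hx' => simp only [map_add, LinearMap.add_apply, hx, hx']
  | single ρ p =>
  induction y using Finsupp.induction_linear with
  | zero => simp only [map_zero, LinearMap.zero_apply]
  | add y y' hy hy' => simp only [map_add, LinearMap.add_apply, hy, hy']
  | single σ q =>
  induction z using Finsupp.induction_linear with
  | zero => simp only [map_zero]
  | add z z' hz hz' => simp only [map_add, hz, hz']
  | single τ r =>
    simp only [taylorStar_single_single, union_assoc]
    congr 1
    linear_combination p * q * r * taylorCoeff_cocycle K a ρ σ τ

end Taylor

/-- the Taylor product is associative:
`(e_ρ ⋆ e_σ) ⋆ e_τ = e_ρ ⋆ (e_σ ⋆ e_τ)` for all `ρ, σ, τ ⊆ {1,…,k}`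
(hence, by `O`-bilinearity, `⋆` is an associative product on `C`). -/
theorem stmt_3 {K : Type*} [Field K] {n k : ℕ} (hn : 1 ≤ n) (hk : 1 ≤ k)
    (a : Fin k → Fin n → ℕ) (ρ σ τ : Finset (Fin k)) :
    taylorStar K a (taylorStar K a (Finsupp.single ρ 1) (Finsupp.single σ 1))
        (Finsupp.single τ 1) =
      taylorStar K a (Finsupp.single ρ 1)
        (taylorStar K a (Finsupp.single σ 1) (Finsupp.single τ 1)) :=
  stmt_3_general K a _ _ _
end

section
/- In the two-periodic complex over R = K[X,Y]/(XY) one has d_i∘d_{i+1} = 0 for all i ≥ 1; the complex is exact in every positive degree, i.e. ker(d_i) = im(d_{i+1}) for every i ≥ 1 (equivalently, the annihilator of x in R is the ideal (y) and the annihilator of y in R is the ideal (x)); and the image of d_1 is the ideal (x). Hence the two-periodic complex is a free resolution of R/(x) by free R-modules of rank one. -/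
/-- the ideal `(XY)` of `K[X,Y]`. -/
noncomputable def xyIdeal (K : Type*) [Field K] : Ideal (MvPolynomial (Fin 2) K) :=
  Ideal.span {MvPolynomial.X 0 * MvPolynomial.X 1}

/-- the ring `R = K[X,Y]/(XY)`. -/
abbrev TwoPerRing (K : Type*) [Field K] : Type _ :=
  MvPolynomial (Fin 2) K ⧸ xyIdeal K

/-- `x`, the image of `X` in `R`. -/
noncomputable def xcl (K : Type*) [Field K] : TwoPerRing K :=
  Ideal.Quotient.mk (xyIdeal K) (MvPolynomial.X 0)

/-- `y`, the image of `Y` in `R`. -/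
noncomputable def ycl (K : Type*) [Field K] : TwoPerRing K :=
  Ideal.Quotient.mk (xyIdeal K) (MvPolynomial.X 1)

/-- multiplier of the two-periodic differential: `d_i` is multiplication by `y`
if `i` is even, and by `x` if `i` is odd. -/
noncomputable def twoPerMul (K : Type*) [Field K] (i : ℕ) : TwoPerRing K :=
  if Even i then ycl K else xcl K

/-- The two-periodic sequence with value `u` in odd degrees and `v` in even degrees. It serves as
the sequence of multipliers of a two-periodic complex, `twoPerMul` being the case `u = x`, `v = y`;
the term of index `0` is not the multiplier of any differential. -/
def twoPeriodic {α : Type*} (u v : α) (i : ℕ) : α :=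
  if Even i then v else u

theorem exact_twoPeriodic_mul {M : Type*} [Mul M] [Zero M] {u v : M}
    (huv : Function.Exact (v * ·) (u * ·)) (hvu : Function.Exact (u * ·) (v * ·)) (i : ℕ) :
    Function.Exact (twoPeriodic u v (i + 1) * ·) (twoPeriodic u v i * ·) := by
  by_cases hi : Even i
  · simpa only [twoPeriodic, hi, Nat.even_add_one, not_true, if_true, if_false] using hvu
  · simpa only [twoPeriodic, hi, Nat.even_add_one, not_false_eq_true, if_true, if_false] using huv

section Quotient

open Ideal.Quotient

variable {A : Type*} [CommRing A] {a b : A}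

theorem exact_mk_mul_of_isLeftRegular (ha : IsLeftRegular a) :
    Function.Exact (mk (Ideal.span {a * b}) b * ·) (mk (Ideal.span {a * b}) a * ·) := by
  intro r
  constructor
  · intro h
    obtain ⟨p, rfl⟩ := mk_surjective r
    obtain ⟨c, hc⟩ : a * b ∣ a * p := by rwa [← eq_zero_iff_dvd, map_mul]
    have hp : p = b * c := ha (hc.trans (mul_assoc a b c))
    exact ⟨mk _ c, by rw [hp, map_mul]⟩
  · rintro ⟨s, rfl⟩
    beta_reduce
    rw [← mul_assoc, ← map_mul, mk_singleton_self, zero_mul]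

theorem stmt_5_general (ha : IsLeftRegular a) (hb : IsLeftRegular b) :
    let x := mk (Ideal.span {a * b}) a
    let y := mk (Ideal.span {a * b}) b
    (∀ i, Function.Exact (twoPeriodic x y (i + 1) * ·) (twoPeriodic x y i * ·)) ∧
      Set.range (twoPeriodic x y 1 * ·) = Ideal.span {x} := by
  have ker_y_eq_range_x :
      Function.Exact (mk (Ideal.span {a * b}) a * ·) (mk (Ideal.span {a * b}) b * ·) := by
    rw [mul_comm a b]
    exact exact_mk_mul_of_isLeftRegular hb
  exact ⟨exact_twoPeriodic_mul (exact_mk_mul_of_isLeftRegular ha) ker_y_eq_range_x,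
    congrArg SetLike.coe (Ideal.range_mul' _)⟩

end Quotient

/-- in the two-periodic complex (`M_i = R` for all `i`, with
`d_i` multiplication by `y` for even `i` and by `x` for odd `i`):
`d_i ∘ d_{i+1} = 0` for all `i ≥ 1`; the complex is exact in every positive
degree (`ker d_i = im d_{i+1}` for `i ≥ 1`); and the image of `d_1` is the
ideal `(x)`.  Hence it is a free resolution of `R/(x)` by rank-one free
`R`-modules. -/
theorem stmt_5 (K : Type*) [Field K] :
    (∀ i : ℕ, 1 ≤ i → ∀ r : TwoPerRing K,
      twoPerMul K i * (twoPerMul K (i + 1) * r) = 0) ∧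
    (∀ i : ℕ, 1 ≤ i → ∀ r : TwoPerRing K,
      twoPerMul K i * r = 0 ↔ ∃ s : TwoPerRing K, twoPerMul K (i + 1) * s = r) ∧
    (∀ r : TwoPerRing K,
      (∃ s : TwoPerRing K, twoPerMul K 1 * s = r) ↔ r ∈ Ideal.span {xcl K}) := by
  obtain ⟨exact_d, range_d_one⟩ := stmt_5_general
    (MvPolynomial.isRegular_X (R := K) (n := (0 : Fin 2))).left
    (MvPolynomial.isRegular_X (n := 1)).left
  exact ⟨fun i _ => (exact_d i).apply_apply_eq_zero, fun i _ => exact_d i,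
    Set.ext_iff.mp range_d_one⟩
end

section
/- Define μ : ℕ×ℕ → ℕ by: μ(i,j) = 0 if i and j are both odd; μ(i,j) = C((i+j)/2, j/2) if i and j are both even; μ(i,j) = C((i+j−1)/2, (j−1)/2) if i is even and j is odd; μ(i,j) = C((i+j−1)/2, (i−1)/2) if i is odd and j is even (C(n,k) is the binomial coefficient). Then μ(i,j) = μ(j,i) for all i, j ∈ ℕ, and μ(i,j)·μ(i+j,k) = μ(j,k)·μ(i,j+k) for all i, j, k ∈ ℕ. Consequently, for any commutative ring R the product e_i ⋆ e_j := μ(i,j)·e_{i+j} on the free R-module ⨁_{i≥0} R·e_i is associative and graded-commutative (e_i ⋆ e_j = (−1)^{ij} e_j ⋆ e_i, the sign referring to the grading |e_i| = i). -/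
/-- the multiplication table `μ(i,j)` of the two-periodic DGA:
`μ(i,j) = 0` if `i, j` both odd; `C((i+j)/2, j/2)` if both even;
`C((i+j−1)/2, (j−1)/2)` if `i` even, `j` odd;
`C((i+j−1)/2, (i−1)/2)` if `i` odd, `j` even. -/
def muCoef (i j : ℕ) : ℕ :=
  if Even i then
    if Even j then Nat.choose ((i + j) / 2) (j / 2)
    else Nat.choose ((i + j - 1) / 2) ((j - 1) / 2)
  else
    if Even j then Nat.choose ((i + j - 1) / 2) ((i - 1) / 2)
    else 0

/-- the product `e_i ⋆ e_j = μ(i,j) e_{i+j}` on the free `R`-module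
`⨁_{i ≥ 0} R e_i`, extended `R`-bilinearly. -/
noncomputable def muProd (R : Type*) [CommRing R] :
    (ℕ →₀ R) →ₗ[R] (ℕ →₀ R) →ₗ[R] (ℕ →₀ R) :=
  Finsupp.lsum R fun i => LinearMap.toSpanSingleton R ((ℕ →₀ R) →ₗ[R] (ℕ →₀ R))
    (Finsupp.lsum R fun j => LinearMap.toSpanSingleton R (ℕ →₀ R)
      ((muCoef i j : R) • Finsupp.single (i + j) (1 : R)))

/-!
The multiplication is that of the tensor product of an exterior algebra on a generator `t` of
degree `1` and a divided power algebra on a generator `y` of degree `2`, with `e_{2a} = y^{(a)}` and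
`e_{2a+1} = t y^{(a)}`. Since `y^{(a)} y^{(b)} = C(a+b, a) y^{(a+b)}` and `t² = 0`, the coefficient
`μ(i,j)` is `C(⌊i/2⌋ + ⌊j/2⌋, ⌊i/2⌋)` unless `i` and `j` are both odd, when it vanishes.
Associativity comes down to the two factorizations of the trinomial coefficient
`(a+b+c)! / (a! b! c!)`, and the sign `(-1)^{ij}` differs from `1` only where `μ(i,j) = 0`.
-/

theorem add_choose_mul_add_choose (a b c : ℕ) :
    (a + b).choose a * (a + b + c).choose (a + b) =
      (b + c).choose b * (a + (b + c)).choose a := by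
  have h := Nat.choose_mul (n := a + b + c) (Nat.le_add_right a b)
  rw [add_assoc, Nat.add_sub_cancel_left, Nat.add_sub_cancel_left, ← add_assoc] at h
  rw [← add_assoc, mul_comm, h, mul_comm]

theorem muCoef_of_odd {i j : ℕ} (hi : Odd i) (hj : Odd j) : muCoef i j = 0 := by
  rw [muCoef, if_neg (Nat.not_even_iff_odd.mpr hi), if_neg (Nat.not_even_iff_odd.mpr hj)]

theorem muCoef_eq_choose {i j : ℕ} (h : Even i ∨ Even j) :
    muCoef i j = (i / 2 + j / 2).choose (i / 2) := by
  unfold muCoef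
  split_ifs with hi hj hj
  · rw [show (i + j) / 2 = i / 2 + j / 2 by grind, Nat.choose_symm_add]
  · rw [show (i + j - 1) / 2 = i / 2 + j / 2 by grind, show (j - 1) / 2 = j / 2 by grind,
      Nat.choose_symm_add]
  · rw [show (i + j - 1) / 2 = i / 2 + j / 2 by grind, show (i - 1) / 2 = i / 2 by grind]
  · exact absurd h (not_or.mpr ⟨hi, hj⟩)

theorem muCoef_comm (i j : ℕ) : muCoef i j = muCoef j i := by
  by_cases h : Even i ∨ Even j
  · rw [muCoef_eq_choose h, muCoef_eq_choose h.symm, Nat.choose_symm_add, add_comm]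
  · obtain ⟨hi, hj⟩ : Odd i ∧ Odd j := by simpa using h
    rw [muCoef_of_odd hi hj, muCoef_of_odd hj hi]

theorem muCoef_mul_muCoef_add (i j k : ℕ) :
    muCoef i j * muCoef (i + j) k = muCoef j k * muCoef i (j + k) := by
  by_cases h : (Even i ∨ Even j) ∧ (Even j ∨ Even k) ∧ (Even i ∨ Even k)
  · obtain ⟨hij, hjk, hik⟩ := h
    have hij_k : Even (i + j) ∨ Even k := by grind
    have hi_jk : Even i ∨ Even (j + k) := by grind
    have half_add_left : (i + j) / 2 = i / 2 + j / 2 := by grind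
    have half_add_right : (j + k) / 2 = j / 2 + k / 2 := by grind
    rw [muCoef_eq_choose hij, muCoef_eq_choose hjk, muCoef_eq_choose hij_k,
      muCoef_eq_choose hi_jk, half_add_left, half_add_right, add_choose_mul_add_choose]
  -- At least two indices are odd: on each side some factor `μ` has two odd arguments.
  · have left_eq_zero : muCoef i j = 0 ∨ muCoef (i + j) k = 0 := by grind [muCoef_of_odd]
    have right_eq_zero : muCoef j k = 0 ∨ muCoef i (j + k) = 0 := by grind [muCoef_of_odd]
    rw [mul_eq_zero.mpr left_eq_zero, mul_eq_zero.mpr right_eq_zero]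

theorem neg_one_pow_mul_muCoef (R : Type*) [Ring R] (i j : ℕ) :
    (-1 : R) ^ (i * j) * muCoef i j = muCoef i j := by
  by_cases h : Even i ∨ Even j
  · rw [(Nat.even_mul.mpr h).neg_one_pow, one_mul]
  · obtain ⟨hi, hj⟩ : Odd i ∧ Odd j := by simpa using h
    rw [muCoef_of_odd hi hj, Nat.cast_zero, mul_zero]

section MuProd

variable (R : Type*) [CommRing R]

theorem muProd_single_single (i j : ℕ) (a b : R) :
    muProd R (Finsupp.single i a) (Finsupp.single j b) =
      Finsupp.single (i + j) (a * b * muCoef i j) := by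
  simp only [muProd, Finsupp.lsum_single, LinearMap.toSpanSingleton_apply, LinearMap.smul_apply,
    Finsupp.smul_single, smul_eq_mul, mul_one, mul_assoc]

theorem muProd_assoc (x y z : ℕ →₀ R) :
    muProd R (muProd R x y) z = muProd R x (muProd R y z) := by
  have trilinear_eq : (muProd R).compr₂ (muProd R) =
      (LinearMap.llcomp R _ _ _).compl₁₂ (muProd R) (muProd R) := by
    ext i j k : 6
    have cocycle : (muCoef i j * muCoef (i + j) k : R) = muCoef j k * muCoef i (j + k) :=
      mod_cast congrArg (Nat.cast (R := R)) (muCoef_mul_muCoef_add i j k)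
    simp [muProd_single_single, add_assoc, cocycle]
  exact LinearMap.congr_fun (LinearMap.congr_fun₂ trilinear_eq x y) z

theorem muProd_single_comm (i j : ℕ) (a b : R) :
    muProd R (Finsupp.single i a) (Finsupp.single j b) =
      (-1 : R) ^ (i * j) • muProd R (Finsupp.single j b) (Finsupp.single i a) := by
  rw [muProd_single_single, muProd_single_single, Finsupp.smul_single, smul_eq_mul,
    mul_left_comm, muCoef_comm j i, neg_one_pow_mul_muCoef, mul_comm b a, add_comm j i]

end MuProd

/-- `μ` is symmetric and satisfies the cocycle identity
`μ(i,j) μ(i+j,k) = μ(j,k) μ(i,j+k)`; consequently, for any commutative ring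
`R`, the product `e_i ⋆ e_j = μ(i,j) e_{i+j}` on `⨁_{i≥0} R e_i` is
associative and graded-commutative (`e_i ⋆ e_j = (−1)^{ij} e_j ⋆ e_i`). -/
theorem stmt_6 :
    (∀ i j : ℕ, muCoef i j = muCoef j i) ∧
    (∀ i j k : ℕ, muCoef i j * muCoef (i + j) k = muCoef j k * muCoef i (j + k)) ∧
    (∀ (R : Type) [CommRing R], ∀ x y z : ℕ →₀ R,
      muProd R (muProd R x y) z = muProd R x (muProd R y z)) ∧
    (∀ (R : Type) [CommRing R], ∀ i j : ℕ,
      muProd R (Finsupp.single i (1 : R)) (Finsupp.single j 1) =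
        (-1 : R) ^ (i * j) • muProd R (Finsupp.single j (1 : R)) (Finsupp.single i 1)) := by
  exact ⟨muCoef_comm, muCoef_mul_muCoef_add, fun R _ => muProd_assoc R,
    fun R _ i j => muProd_single_comm R i j 1 1⟩
end

section
/- Let K be a field, O = K[x,y,z], and I = (x², xy, xz, y²) ⊆ O. With d₁ : O⁴ → O, d₁(f₁,f₂,f₃,f₄) = f₁x² + f₂xy + f₃xz + f₄y²; d₂ : O⁴ → O⁴, d₂(g₁,g₂,g₃,g₄) = (y g₂ + z g₃, −y g₁ − x g₂ + z g₄, −x g₃ − y g₄, x g₁); and d₃ : O → O⁴, d₃(h) = (0, z h, −y h, x h), one has: d₁∘d₂ = 0, d₂∘d₃ = 0, d₃ is injective, ker(d₂) = im(d₃), ker(d₁) = im(d₂), and im(d₁) = I. Hence 0 → O → O⁴ → O⁴ → O → O/I → 0 is a free O-module resolution of O/I of length three. -/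
/-!
The maps make sense for any three elements `x`, `y`, `z` of a commutative ring, and they are exact
as soon as `x, y, z` is weakly regular. If `f₀ x² + f₁ xy + f₂ xz + f₃ y² = 0`, then `x` divides
`f₃ y²`, so `f₃ = x e` because `y` is regular modulo `x`. Cancelling `x` leaves the relation
`x f₀ + y (f₁ + y e) + z f₂ = 0`, a combination of the three Koszul relations between `x`, `y`, `z`;
`e` and the Koszul coefficients are the coordinates of a preimage of `f` under `d₂`. At the next
step, `x g₂ + y g₃ = 0` forces `g₃ = x e`, and cancelling `x` gives the other coordinates of `g`.
-/

open RingTheory.Sequence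

section RegularSequence

variable {R : Type*} [CommRing R]

theorem isWeaklyRegular_self_iff {rs : List R} :
    IsWeaklyRegular R rs ↔ ∀ (i : ℕ) (hi : i < rs.length) (p : R),
      rs[i] * p ∈ Ideal.ofList (rs.take i) → p ∈ Ideal.ofList (rs.take i) := by
  simp only [isWeaklyRegular_iff, isSMulRegular_quotient_iff_mem_of_smul_mem, smul_eq_mul,
    Ideal.mul_top]

theorem dvd_of_dvd_mul_of_isWeaklyRegular {x y p : R} {rs : List R}
    (h : IsWeaklyRegular R (x :: y :: rs)) (hp : x ∣ y * p) : x ∣ p := by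
  have := isWeaklyRegular_self_iff.mp h 1 (by simp) p
  simp only [List.getElem_cons_succ, List.getElem_cons_zero, List.take_succ_cons, List.take_zero,
    Ideal.ofList_singleton, Ideal.mem_span_singleton] at this
  exact this hp

theorem mem_span_pair_of_mul_mem_of_isWeaklyRegular {x y z p : R} {rs : List R}
    (h : IsWeaklyRegular R (x :: y :: z :: rs)) (hp : z * p ∈ Ideal.span {x, y}) :
    p ∈ Ideal.span {x, y} := by
  have := isWeaklyRegular_self_iff.mp h 2 (by simp) p
  simp only [List.getElem_cons_succ, List.getElem_cons_zero, List.take_succ_cons, List.take_zero,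
    Ideal.ofList_cons, Ideal.ofList_nil, sup_bot_eq, ← Ideal.span_insert] at this
  exact this hp

theorem exists_koszul_of_isWeaklyRegular {x y z a b c : R} {rs : List R}
    (h : IsWeaklyRegular R (x :: y :: z :: rs)) (habc : x * a + y * b + z * c = 0) :
    ∃ p q r, a = y * p + z * q ∧ b = -(x * p) + z * r ∧ c = -(x * q) - y * r := by
  have hc : c ∈ Ideal.span {x, y} := mem_span_pair_of_mul_mem_of_isWeaklyRegular h <|
    Ideal.mem_span_pair.mpr ⟨-a, -b, by linear_combination -habc⟩
  obtain ⟨q, r, hqr⟩ := Ideal.mem_span_pair.mp hc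
  have hx_dvd : x ∣ y * (b + z * r) := ⟨-(a + z * q), by linear_combination habc + z * hqr⟩
  obtain ⟨p, hp⟩ := dvd_of_dvd_mul_of_isWeaklyRegular h hx_dvd
  refine ⟨-p, -q, -r, ?_, by linear_combination hp, by linear_combination -hqr⟩
  apply ((isWeaklyRegular_cons_iff R x _).mp h).1
  linear_combination habc + z * hqr - y * hp

end RegularSequence

section Variables

open MvPolynomial

variable {σ R : Type*}

theorem mem_span_X_image_of_X_mul_mem [CommSemiring R] {s : Set σ} {i : σ} (hi : i ∉ s)
    {p : MvPolynomial σ R} (hp : X i * p ∈ Ideal.span (X '' s : Set (MvPolynomial σ R))) :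
    p ∈ Ideal.span (X '' s : Set (MvPolynomial σ R)) := by
  rw [mem_ideal_span_X_image] at hp ⊢
  intro m hm
  obtain ⟨j, hj, hmj⟩ := hp (Finsupp.single i 1 + m) (by simpa [support_X_mul] using hm)
  have hij : i ≠ j := fun h => hi (h ▸ hj)
  exact ⟨j, hj, by simpa [hij] using hmj⟩

theorem ofList_map_X [CommSemiring R] (l : List σ) :
    Ideal.ofList (l.map X) = Ideal.span (X '' {j | j ∈ l} : Set (MvPolynomial σ R)) := by
  simp only [Ideal.ofList, List.mem_map, Set.image, Set.mem_ofPred_eq]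

theorem isWeaklyRegular_map_X [CommRing R] {l : List σ} (hl : l.Nodup) :
    IsWeaklyRegular (MvPolynomial σ R) (l.map X : List (MvPolynomial σ R)) := by
  refine isWeaklyRegular_self_iff.mpr fun i hi p hp => ?_
  rw [List.length_map] at hi
  rw [List.getElem_map, ← List.map_take, ofList_map_X] at hp
  rw [← List.map_take, ofList_map_X]
  refine mem_span_X_image_of_X_mul_mem (fun hmem => ?_) hp
  obtain ⟨j, hj, hji⟩ := List.mem_take_iff_getElem.mp hmem
  have : j = i := hl.getElem_inj_iff.mp hji
  lia

end Variables

namespace MonomialResolution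

variable {R : Type*} [CommRing R] (x y z : R)

/-- The generators `x², xy, xz, y²` as a map out of the free module with basis
`π^{xx}, π^{xy}, π^{xz}, π^{yy}`. -/
def d₁ : (Fin 4 → R) →ₗ[R] R :=
  Fintype.linearCombination R ![x ^ 2, x * y, x * z, y ^ 2]

/-- The syzygies of `x², xy, xz, y²`: the columns are the images of
`π^{xyy}, π^{yxx}, π^{zxx}, π^{zxy}`. -/
def d₂ : (Fin 4 → R) →ₗ[R] (Fin 4 → R) :=
  Matrix.mulVecLin !![0, y, z, 0; -y, -x, 0, z; 0, 0, -x, -y; x, 0, 0, 0]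

/-- The second syzygy of `x², xy, xz, y²`, the image of the basis vector `π`. -/
def d₃ : R →ₗ[R] (Fin 4 → R) :=
  LinearMap.toSpanSingleton R (Fin 4 → R) ![0, z, -y, x]

theorem coe_d₁ : ⇑(d₁ x y z) = fun f =>
    f 0 * x ^ 2 + f 1 * (x * y) + f 2 * (x * z) + f 3 * y ^ 2 := by
  ext f
  simp [d₁, Fintype.linearCombination_apply, Fin.sum_univ_four]

theorem coe_d₂ : ⇑(d₂ x y z) = fun g =>
    ![y * g 1 + z * g 2, -(y * g 0) - x * g 1 + z * g 3, -(x * g 2) - y * g 3, x * g 0] := by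
  ext g i
  fin_cases i <;> simp [d₂, Matrix.mulVec, dotProduct, Fin.sum_univ_four, sub_eq_add_neg]

theorem coe_d₃ : ⇑(d₃ x y z) = fun h => ![0, z * h, -(y * h), x * h] := by
  ext h i
  fin_cases i <;> simp [d₃, mul_comm]

theorem range_d₁ : LinearMap.range (d₁ x y z) = Ideal.span {x ^ 2, x * y, x * z, y ^ 2} := by
  rw [d₁, Fintype.range_linearCombination, Ideal.span]
  simp only [Matrix.range_cons, Matrix.range_empty, Set.singleton_union, Set.union_empty]

theorem d₁_comp_d₂ : d₁ x y z ∘ₗ d₂ x y z = 0 := by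
  refine LinearMap.ext fun g => ?_
  simp only [LinearMap.comp_apply, LinearMap.zero_apply, coe_d₁, coe_d₂, Matrix.cons_val]
  ring

theorem d₂_comp_d₃ : d₂ x y z ∘ₗ d₃ x y z = 0 := by
  ext i
  fin_cases i <;> simp [coe_d₂, coe_d₃] <;> ring

variable {x y z}

theorem injective_d₃ (hx : IsSMulRegular R x) : Function.Injective (d₃ x y z) := by
  intro a b hab
  simp only [coe_d₃] at hab
  exact hx (congrFun hab 3)

theorem exact_d₃_d₂ {rs : List R} (h : IsWeaklyRegular R (x :: y :: rs)) :
    Function.Exact (d₃ x y z) (d₂ x y z) := by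
  have hx : IsSMulRegular R x := ((isWeaklyRegular_cons_iff R x _).mp h).1
  refine LinearMap.exact_of_comp_eq_zero_of_ker_le_range (d₂_comp_d₃ x y z) fun g hg => ?_
  rw [LinearMap.mem_ker, coe_d₂] at hg
  have h₁ : -(y * g 0) - x * g 1 + z * g 3 = 0 := congrFun hg 1
  have h₂ : -(x * g 2) - y * g 3 = 0 := congrFun hg 2
  have h₃ : x * g 0 = 0 := congrFun hg 3
  have hg₀ : g 0 = 0 := hx (by simpa using h₃)
  obtain ⟨e, hg₃⟩ : x ∣ g 3 :=
    dvd_of_dvd_mul_of_isWeaklyRegular h ⟨-g 2, by linear_combination -h₂⟩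
  have hg₁ : g 1 = z * e := hx <| by linear_combination -h₁ - y * hg₀ + z * hg₃
  have hg₂ : g 2 = -(y * e) := hx <| by linear_combination -h₂ - y * hg₃
  refine ⟨e, ?_⟩
  rw [coe_d₃]
  ext i
  fin_cases i
  exacts [hg₀.symm, hg₁.symm, hg₂.symm, hg₃.symm]

theorem exact_d₂_d₁ {rs : List R} (h : IsWeaklyRegular R (x :: y :: z :: rs)) :
    Function.Exact (d₂ x y z) (d₁ x y z) := by
  have hx : IsSMulRegular R x := ((isWeaklyRegular_cons_iff R x _).mp h).1
  refine LinearMap.exact_of_comp_eq_zero_of_ker_le_range (d₁_comp_d₂ x y z) fun f hf => ?_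
  rw [LinearMap.mem_ker, coe_d₁] at hf
  have hx_dvd : x ∣ y * (y * f 3) :=
    ⟨-(f 0 * x + f 1 * y + f 2 * z), by linear_combination hf⟩
  obtain ⟨e, hf₃⟩ : x ∣ f 3 :=
    dvd_of_dvd_mul_of_isWeaklyRegular h (dvd_of_dvd_mul_of_isWeaklyRegular h hx_dvd)
  have relation : x * f 0 + y * (f 1 + y * e) + z * f 2 = 0 := hx <| by
    linear_combination hf - y ^ 2 * hf₃
  obtain ⟨p, q, r, hf₀, hf₁, hf₂⟩ := exists_koszul_of_isWeaklyRegular h relation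
  have hf₁' : -(y * e) - x * p + z * r = f 1 := by linear_combination -hf₁
  refine ⟨![e, p, q, r], ?_⟩
  rw [coe_d₂]
  ext i
  fin_cases i
  exacts [hf₀.symm, hf₁', hf₂.symm, hf₃.symm]

end MonomialResolution

open MonomialResolution

theorem stmt_9_general {R : Type*} [CommRing R] {x y z : R} (h : IsWeaklyRegular R [x, y, z]) :
    d₁ x y z ∘ₗ d₂ x y z = 0 ∧
    d₂ x y z ∘ₗ d₃ x y z = 0 ∧
    Function.Injective (d₃ x y z) ∧
    Function.Exact (d₃ x y z) (d₂ x y z) ∧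
    Function.Exact (d₂ x y z) (d₁ x y z) ∧
    LinearMap.range (d₁ x y z) = Ideal.span {x ^ 2, x * y, x * z, y ^ 2} :=
  ⟨d₁_comp_d₂ x y z, d₂_comp_d₃ x y z, injective_d₃ ((isWeaklyRegular_cons_iff R x _).mp h).1,
    exact_d₃_d₂ h, exact_d₂_d₁ h, range_d₁ x y z⟩

/-- Example 4.2: over `O = K[x,y,z]`, with
`I = (x², xy, xz, y²)`, the maps
`d₁(f₁,f₂,f₃,f₄) = f₁x² + f₂xy + f₃xz + f₄y²`,
`d₂(g₁,g₂,g₃,g₄) = (y g₂ + z g₃, −y g₁ − x g₂ + z g₄, −x g₃ − y g₄, x g₁)` and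
`d₃(h) = (0, z h, −y h, x h)` satisfy `d₁∘d₂ = 0`, `d₂∘d₃ = 0`, `d₃` injective,
`ker d₂ = im d₃`, `ker d₁ = im d₂`, and `im d₁ = I`; hence
`0 → O → O⁴ → O⁴ → O → O/I → 0` is a free `O`-module resolution of `O/I` of
length three. -/
theorem stmt_9 (K : Type*) [Field K] :
    let O := MvPolynomial (Fin 3) K
    let x : O := MvPolynomial.X 0
    let y : O := MvPolynomial.X 1
    let z : O := MvPolynomial.X 2
    let I : Ideal O := Ideal.span {x ^ 2, x * y, x * z, y ^ 2}
    let d1 : (Fin 4 → O) → O := fun f =>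
      f 0 * x ^ 2 + f 1 * (x * y) + f 2 * (x * z) + f 3 * y ^ 2
    let d2 : (Fin 4 → O) → (Fin 4 → O) := fun g =>
      ![y * g 1 + z * g 2, -(y * g 0) - x * g 1 + z * g 3,
        -(x * g 2) - y * g 3, x * g 0]
    let d3 : O → (Fin 4 → O) := fun h => ![0, z * h, -(y * h), x * h]
    (∀ g, d1 (d2 g) = 0) ∧
    (∀ h, d2 (d3 h) = 0) ∧
    Function.Injective d3 ∧
    (∀ g, d2 g = 0 ↔ ∃ h, d3 h = g) ∧
    (∀ f, d1 f = 0 ↔ ∃ g, d2 g = f) ∧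
    (∀ p, (∃ f, d1 f = p) ↔ p ∈ I) := by
  simpa only [LinearMap.ext_iff, LinearMap.comp_apply, LinearMap.zero_apply, Function.Exact,
    Set.mem_range, SetLike.ext_iff, LinearMap.mem_range, coe_d₁, coe_d₂, coe_d₃]
    using stmt_9_general (isWeaklyRegular_map_X (R := K) (l := [0, 1, 2]) (by decide))
end

section
/- Let K be a field, O = K[x,y,z,w], and I = (x², xy, y²z², zw, w²) ⊆ O. Consider the complex 0 → O → O⁵ → O⁸ → O⁵ → O with O-linear differentials given on bases as follows: d₁ on the basis π^a, π^b, π^c, π^d, π^e of O⁵ by π^a ↦ x², π^b ↦ xy, π^c ↦ y²z², π^d ↦ wz, π^e ↦ w²; d₂ on the basis π^{ab}, π^{ad}, π^{ae}, π^{bc}, π^{bd}, π^{be}, π^{cd}, π^{de} of O⁸ by π^{ab} ↦ xπ^b − yπ^a, π^{ad} ↦ x²π^d − wzπ^a, π^{ae} ↦ x²π^e − w²π^a, π^{bc} ↦ xπ^c − yz²π^b, π^{bd} ↦ xyπ^d − wzπ^b, π^{be} ↦ xyπ^e − w²π^b, π^{cd} ↦ y²zπ^d − wπ^c, π^{de}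 ↦ zπ^e − wπ^d; d₃ on the basis π^{abd}, π^{abe}, π^{ade}, π^{bde}, π^{bcd} of O⁵ by π^{abd} ↦ wzπ^{ab} + xπ^{bd} − yπ^{ad}, π^{abe} ↦ w²π^{ab} + xπ^{be} − yπ^{ae}, π^{ade} ↦ x²π^{de} + wπ^{ad} − zπ^{ae}, π^{bde} ↦ xyπ^{de} + wπ^{bd} − zπ^{be}, π^{bcd} ↦ wπ^{bc} + xπ^{cd} − yzπ^{bd}; and d₄ on the basis π^{abde} of O by π^{abde} ↦ −wπ^{abd} + zπ^{abe} − yπ^{ade} + xπ^{bde}. Then consecutive compositions vanish, d₄ is injective, ker(d₃) = im(d₄), ker(d₂) = im(d₃), ker(d₁) = im(d₂), and im(d₁) = I; hence this complex is a free O-module resolution of O/I of length four. -/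
/-!
Each variable is a nonzerodivisor modulo any set of the others. This gives the exactness of the
Koszul complexes on two and three variables, which settles the kernels of `d₃` and `d₂` one
coordinate at a time. For the kernel of `d₁`, a syzygy of `x², xy, y²z², zw, w²` has its
`y²z²`-coefficient in `(x, w)`, which a combination of `π^{bc}` and `π^{cd}` removes. What is left
has the form `x (a x + b y) + w (c z + d w) = 0`, so `a x + b y = w t` and `c z + d w = -x t` for
some `t`; then `t ∈ (x, y) ∩ (z, w) = (x, y) (z, w)`, and splitting `t` accordingly leaves two
Koszul syzygies.
-/

/-- A family is permutably (weakly) regular if every member is a nonzerodivisor modulo the ideal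
generated by any set of other members. For a finite family this says that every ordering of it is a
weakly regular sequence; no properness of the generated ideal is required. -/
def IsPermutablyRegular {ι R : Type*} [CommRing R] (v : ι → R) : Prop :=
  ∀ ⦃s : Set ι⦄ ⦃j : ι⦄, j ∉ s → ∀ ⦃f : R⦄,
    v j * f ∈ Ideal.span (v '' s) → f ∈ Ideal.span (v '' s)

theorem isPermutablyRegular_X (σ K : Type*) [CommRing K] :
    IsPermutablyRegular (MvPolynomial.X : σ → MvPolynomial σ K) := by
  intro s j hj f hf
  rw [MvPolynomial.mem_ideal_span_X_image] at hf ⊢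
  intro m hm
  have hm' : Finsupp.single j 1 + m ∈ (MvPolynomial.X j * f).support := by
    rwa [MvPolynomial.mem_support_iff, MvPolynomial.coeff_X_mul, ← MvPolynomial.mem_support_iff]
  obtain ⟨i, hi, hmi⟩ := hf _ hm'
  have hji : j ≠ i := fun h => hj (h ▸ hi)
  exact ⟨i, hi, by simpa [Finsupp.single_apply, hji] using hmi⟩

namespace IsPermutablyRegular

variable {ι R : Type*} [CommRing R] {v : ι → R} {j k l : ι}

theorem isLeftRegular (hv : IsPermutablyRegular v) (j : ι) : IsLeftRegular (v j) := by
  refine isLeftRegular_of_non_zero_divisor _ fun f hf => ?_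
  simpa using hv (Set.notMem_empty j) (f := f) (by simp [hf])

theorem mem_span_of_pow_mul_mem (hv : IsPermutablyRegular v) {s : Set ι} (hj : j ∉ s) {f : R} :
    ∀ n : ℕ, v j ^ n * f ∈ Ideal.span (v '' s) → f ∈ Ideal.span (v '' s)
  | 0, hf => by simpa using hf
  | n + 1, hf => hv.mem_span_of_pow_mul_mem hj n (hv hj (by rwa [← mul_assoc, ← pow_succ']))

theorem span_image_inf_span_image (hv : IsPermutablyRegular v) {s t : Set ι} (ht : t.Finite)
    (hst : Disjoint s t) :
    Ideal.span (v '' s) ⊓ Ideal.span (v '' t) = Ideal.span (v '' s) * Ideal.span (v '' t) := by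
  refine le_antisymm ?_ Ideal.mul_le_inf
  induction t, ht using Set.Finite.induction_on with
  | empty => simp
  | @insert k t hkt _ ih =>
    rw [Set.disjoint_insert_right] at hst
    obtain ⟨hks, hst⟩ := hst
    rintro f ⟨hfs, hft⟩
    rw [Set.image_insert_eq] at hft ⊢
    obtain ⟨a, g, hg, rfl⟩ := Ideal.mem_span_insert.1 hft
    have ha : a ∈ Ideal.span (v '' (s ∪ t)) := by
      refine hv (by simp [hks, hkt] : k ∉ s ∪ t) ?_
      rw [Set.image_union, Ideal.span_union]
      convert sub_mem (Ideal.mem_sup_left hfs) (Ideal.mem_sup_right hg) using 1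
      ring
    rw [Set.image_union, Ideal.span_union] at ha
    obtain ⟨b, hb, c, hc, rfl⟩ := Submodule.mem_sup.1 ha
    have hcs : c * v k + g ∈ Ideal.span (v '' s) := by
      have := sub_mem hfs (Ideal.mul_mem_right (v k) _ hb)
      rwa [add_mul, add_assoc, add_sub_cancel_left] at this
    have hcg := ih hst ⟨hcs, add_mem (Ideal.mul_mem_right _ _ hc) hg⟩
    rw [add_mul, add_assoc]
    exact add_mem (Ideal.mul_mem_mul hb (Ideal.subset_span (Set.mem_insert _ _)))
      (Ideal.mul_mono_right (Ideal.span_mono (Set.subset_insert _ _)) hcg)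

theorem exists_of_mul_eq_mul (hv : IsPermutablyRegular v) (hjk : j ≠ k) {a b : R}
    (h : v j * a = v k * b) : ∃ c, a = v k * c ∧ b = v j * c := by
  have ha : a ∈ Ideal.span (v '' {k}) :=
    hv (by simpa using hjk) (by simp [h, Ideal.mem_span_singleton])
  rw [Set.image_singleton, Ideal.mem_span_singleton] at ha
  obtain ⟨c, rfl⟩ := ha
  exact ⟨c, rfl, hv.isLeftRegular k (by linear_combination -h)⟩

theorem mem_span_pair_of_mul_eq_mul_add_mul (hv : IsPermutablyRegular v) (hjk : j ≠ k)
    (hjl : j ≠ l) {a b c : R} (h : v j * a = v k * b + v l * c) :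
    a ∈ Ideal.span {v k, v l} := by
  have hj : j ∉ ({k, l} : Set ι) := by simp [hjk, hjl]
  rw [← Set.image_pair]
  refine hv hj ?_
  rw [Set.image_pair, Ideal.mem_span_pair]
  exact ⟨b, c, by linear_combination -h⟩

theorem exists_of_mul_eq_mul_add_mul (hv : IsPermutablyRegular v) (hjk : j ≠ k) (hjl : j ≠ l)
    (hkl : k ≠ l) {a b c : R} (h : v j * a = v k * b + v l * c) :
    ∃ p q r, a = v k * p + v l * q ∧ b = v j * p + v l * r ∧ c = v j * q - v k * r := by
  obtain ⟨p, q, rfl⟩ :=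
    Ideal.mem_span_pair.1 (hv.mem_span_pair_of_mul_eq_mul_add_mul hjk hjl h)
  obtain ⟨r, hr₁, hr₂⟩ := hv.exists_of_mul_eq_mul hkl
    (a := b - v j * p) (b := v j * q - c) (by linear_combination -h)
  exact ⟨p, q, r, by ring, by linear_combination hr₁, by linear_combination -hr₂⟩

end IsPermutablyRegular

namespace Katthan

variable {R : Type*} [CommRing R] (x y z w : R)

/-- The differential `d₁` of Katthän's complex, with image `(x², xy, y²z², zw, w²)`, in coordinates
along `π^a, π^b, π^c, π^d, π^e`. -/
@[simps]
def d1 : (Fin 5 → R) →ₗ[R] R where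
  toFun f := f 0 * x ^ 2 + f 1 * (x * y) + f 2 * (y ^ 2 * z ^ 2) + f 3 * (z * w) + f 4 * w ^ 2
  map_add' f f' := by simp only [Pi.add_apply]; ring
  map_smul' r f := by simp only [Pi.smul_apply, smul_eq_mul, RingHom.id_apply]; ring

/-- The differential `d₂` of Katthän's complex, in coordinates along
`π^{ab}, π^{ad}, π^{ae}, π^{bc}, π^{bd}, π^{be}, π^{cd}, π^{de}`. -/
@[simps]
def d2 : (Fin 8 → R) →ₗ[R] (Fin 5 → R) where
  toFun g :=
    ![-(y * g 0) - w * z * g 1 - w ^ 2 * g 2,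
      x * g 0 - y * z ^ 2 * g 3 - w * z * g 4 - w ^ 2 * g 5,
      x * g 3 - w * g 6,
      x ^ 2 * g 1 + x * y * g 4 + y ^ 2 * z * g 6 - w * g 7,
      x ^ 2 * g 2 + x * y * g 5 + z * g 7]
  map_add' g g' := by ext i; fin_cases i <;> dsimp <;> ring
  map_smul' r g := by ext i; fin_cases i <;> dsimp <;> ring

/-- The differential `d₃` of Katthän's complex, in coordinates along
`π^{abd}, π^{abe}, π^{ade}, π^{bde}, π^{bcd}`. -/
@[simps]
def d3 : (Fin 5 → R) →ₗ[R] (Fin 8 → R) where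
  toFun h :=
    ![w * z * h 0 + w ^ 2 * h 1,
      -(y * h 0) + w * h 2,
      -(y * h 1) - z * h 2,
      w * h 4,
      x * h 0 + w * h 3 - y * z * h 4,
      x * h 1 - z * h 3,
      x * h 4,
      x ^ 2 * h 2 + x * y * h 3]
  map_add' h h' := by ext i; fin_cases i <;> dsimp <;> ring
  map_smul' r h := by ext i; fin_cases i <;> dsimp <;> ring

/-- The differential `d₄` of Katthän's complex, in the coordinate along `π^{abde}`. -/
@[simps]
def d4 : R →ₗ[R] (Fin 5 → R) where
  toFun p := ![-(w * p), z * p, -(y * p), x * p, 0]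
  map_add' p p' := by ext i; fin_cases i <;> dsimp <;> ring
  map_smul' r p := by ext i; fin_cases i <;> dsimp <;> ring

theorem d1_d2 (g : Fin 8 → R) : d1 x y z w (d2 x y z w g) = 0 := by
  simp only [d1_apply, d2_apply, Matrix.cons_val]
  ring

theorem d2_d3 (h : Fin 5 → R) : d2 x y z w (d3 x y z w h) = 0 := by
  ext i
  fin_cases i <;>
    simp only [d2_apply, d3_apply, Fin.reduceFinMk, Matrix.cons_val, Pi.zero_apply] <;>
    ring

theorem d3_d4 (p : R) : d3 x y z w (d4 x y z w p) = 0 := by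
  ext i
  fin_cases i <;>
    simp only [d3_apply, d4_apply, Fin.reduceFinMk, Matrix.cons_val, Pi.zero_apply] <;>
    ring

theorem range_d1 :
    LinearMap.range (d1 x y z w) =
      Ideal.span {x ^ 2, x * y, y ^ 2 * z ^ 2, z * w, w ^ 2} := by
  have hrange : ({x ^ 2, x * y, y ^ 2 * z ^ 2, z * w, w ^ 2} : Set R) =
      Set.range ![x ^ 2, x * y, y ^ 2 * z ^ 2, z * w, w ^ 2] := by
    simp only [Matrix.range_cons, Matrix.range_empty, Set.insert_eq, Set.union_empty]
  ext p
  rw [hrange, Ideal.mem_span_range_iff_exists_fun]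
  simp [Fin.sum_univ_five]

variable {x y z w}

theorem d4_injective (hx : IsLeftRegular x) : Function.Injective (d4 x y z w) :=
  fun _ _ h => hx (congrFun h 3)

theorem exact_d4_d3 (hv : IsPermutablyRegular ![x, y, z, w]) :
    Function.Exact (d4 x y z w) (d3 x y z w) := by
  refine fun h => ⟨fun hh => ?_, by rintro ⟨p, rfl⟩; exact d3_d4 x y z w p⟩
  have hx : IsLeftRegular x := hv.isLeftRegular 0
  have hz : IsLeftRegular z := hv.isLeftRegular 2
  have e2 : -(y * h 1) - z * h 2 = 0 := congrFun hh 2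
  have e4 : x * h 0 + w * h 3 - y * z * h 4 = 0 := congrFun hh 4
  have e5 : x * h 1 - z * h 3 = 0 := congrFun hh 5
  have e6 : x * h 4 = 0 := congrFun hh 6
  have h4 : h 4 = 0 := hx (by simpa using e6)
  obtain ⟨p, h1, h3⟩ : ∃ p, h 1 = z * p ∧ h 3 = x * p :=
    hv.exists_of_mul_eq_mul (j := 0) (k := 2) (by decide) (sub_eq_zero.1 e5)
  have h0 : h 0 = -(w * p) := hx (by linear_combination e4 - w * h3 + y * z * h4)
  have h2 : h 2 = -(y * p) := hz (by linear_combination -e2 - y * h1)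
  refine ⟨p, ?_⟩
  ext i
  fin_cases i
  exacts [h0.symm, h1.symm, h2.symm, h3.symm, h4.symm]

theorem exact_d3_d2 (hv : IsPermutablyRegular ![x, y, z, w]) :
    Function.Exact (d3 x y z w) (d2 x y z w) := by
  refine fun g => ⟨fun hg => ?_, by rintro ⟨h, rfl⟩; exact d2_d3 x y z w h⟩
  have hw : IsLeftRegular w := hv.isLeftRegular 3
  have e0 : -(y * g 0) - w * z * g 1 - w ^ 2 * g 2 = 0 := congrFun hg 0
  have e1 : x * g 0 - y * z ^ 2 * g 3 - w * z * g 4 - w ^ 2 * g 5 = 0 := congrFun hg 1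
  have e2 : x * g 3 - w * g 6 = 0 := congrFun hg 2
  have e3 : x ^ 2 * g 1 + x * y * g 4 + y ^ 2 * z * g 6 - w * g 7 = 0 := congrFun hg 3
  obtain ⟨h4, g3, g6⟩ : ∃ h4, g 3 = w * h4 ∧ g 6 = x * h4 :=
    hv.exists_of_mul_eq_mul (j := 0) (k := 3) (by decide) (sub_eq_zero.1 e2)
  obtain ⟨m, g0, hm⟩ : ∃ m, g 0 = w * m ∧ z * (g 4 + y * z * h4) + w * g 5 = x * m :=
    hv.exists_of_mul_eq_mul (j := 0) (k := 3) (by decide)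
      (show x * g 0 = w * (z * (g 4 + y * z * h4) + w * g 5) by
        linear_combination e1 + y * z ^ 2 * g3)
  obtain ⟨h0, h1, h3, rfl, g4, g5⟩ : ∃ h0 h1 h3, m = z * h0 + w * h1 ∧
      g 4 + y * z * h4 = x * h0 + w * h3 ∧ g 5 = x * h1 - z * h3 :=
    hv.exists_of_mul_eq_mul_add_mul (j := 0) (k := 2) (l := 3)
      (by decide) (by decide) (by decide) hm.symm
  obtain ⟨h2, g1, g2⟩ : ∃ h2, g 1 + y * h0 = w * h2 ∧ -(g 2 + y * h1) = z * h2 :=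
    hv.exists_of_mul_eq_mul (j := 2) (k := 3) (by decide)
      (show z * (g 1 + y * h0) = w * -(g 2 + y * h1) from
        hw (by linear_combination -e0 - y * g0))
  have g7 : g 7 = x ^ 2 * h2 + x * y * h3 :=
    hw (by linear_combination -e3 + x ^ 2 * g1 + x * y * g4 + y ^ 2 * z * g6)
  refine ⟨![h0, h1, h2, h3, h4], ?_⟩
  ext i
  fin_cases i
  exacts [show w * z * h0 + w ^ 2 * h1 = g 0 by linear_combination -g0,
    show -(y * h0) + w * h2 = g 1 by linear_combination -g1,
    show -(y * h1) - z * h2 = g 2 by linear_combination g2,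
    g3.symm,
    show x * h0 + w * h3 - y * z * h4 = g 4 by linear_combination -g4,
    g5.symm, g6.symm, g7.symm]

theorem apply_two_mem_span_of_d1_eq_zero (hv : IsPermutablyRegular ![x, y, z, w]) {f : Fin 5 → R}
    (hf : d1 x y z w f = 0) : f 2 ∈ Ideal.span {x, w} := by
  have hfxw : y ^ 2 * (z ^ 2 * f 2) ∈ Ideal.span {x, w} := by
    rw [d1_apply] at hf
    refine Ideal.mem_span_pair.2 ⟨-(f 0 * x + f 1 * y), -(f 3 * z + f 4 * w), ?_⟩
    linear_combination -hf
  have himage : ![x, y, z, w] '' {0, 3} = {x, w} := Set.image_pair ..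
  rw [← himage] at hfxw ⊢
  exact hv.mem_span_of_pow_mul_mem (j := 2) (by decide) 2
    (hv.mem_span_of_pow_mul_mem (j := 1) (by decide) 2 hfxw)

theorem exists_of_mem_span_pair_of_mem_span_pair (hv : IsPermutablyRegular ![x, y, z, w]) {t : R}
    (hxy : t ∈ Ideal.span {x, y}) (hzw : t ∈ Ideal.span {z, w}) :
    ∃ p q r s, t = x * z * p + x * w * q + y * z * r + y * w * s := by
  have himage₀₁ : ![x, y, z, w] '' {0, 1} = {x, y} := Set.image_pair ..
  have himage₂₃ : ![x, y, z, w] '' {2, 3} = {z, w} := Set.image_pair ..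
  have hinf := hv.span_image_inf_span_image (s := {0, 1}) (t := {2, 3}) (Set.toFinite _) (by simp)
  rw [himage₀₁, himage₂₃, Ideal.span_pair_mul_span_pair] at hinf
  have ht := hinf.le ⟨hxy, hzw⟩
  simp only [Ideal.mem_span_insert, Ideal.mem_span_singleton'] at ht
  obtain ⟨p, _, ⟨q, _, ⟨r, _, ⟨s, rfl⟩, rfl⟩, rfl⟩, rfl⟩ := ht
  exact ⟨p, q, r, s, by ring⟩

theorem exists_d2_eq_of_apply_two_eq_zero (hv : IsPermutablyRegular ![x, y, z, w])
    {f : Fin 5 → R} (hf : d1 x y z w f = 0) (hf2 : f 2 = 0) : ∃ g, d2 x y z w g = f := by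
  rw [d1_apply, hf2] at hf
  obtain ⟨t, hwt, hxt⟩ : ∃ t, x * f 0 + y * f 1 = w * t ∧ -(z * f 3 + w * f 4) = x * t :=
    hv.exists_of_mul_eq_mul (j := 0) (k := 3) (by decide)
      (show x * (x * f 0 + y * f 1) = w * -(z * f 3 + w * f 4) by linear_combination hf)
  have hxy : t ∈ Ideal.span {x, y} :=
    hv.mem_span_pair_of_mul_eq_mul_add_mul (j := 3) (k := 0) (l := 1) (by decide) (by decide)
      hwt.symm
  have hzw : -t ∈ Ideal.span {z, w} :=
    hv.mem_span_pair_of_mul_eq_mul_add_mul (j := 0) (k := 2) (l := 3) (by decide) (by decide)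
      (show x * -t = z * f 3 + w * f 4 by linear_combination hxt)
  obtain ⟨p, q, r, s, rfl⟩ := exists_of_mem_span_pair_of_mem_span_pair hv hxy (neg_mem_iff.1 hzw)
  obtain ⟨g0, h0, h1⟩ : ∃ g0, w * (z * p + w * q) - f 0 = y * g0 ∧
      f 1 - w * (z * r + w * s) = x * g0 :=
    hv.exists_of_mul_eq_mul (j := 0) (k := 1) (by decide)
      (show x * (w * (z * p + w * q) - f 0) = y * (f 1 - w * (z * r + w * s)) by
        linear_combination -hwt)
  obtain ⟨g7, h3, h4⟩ : ∃ g7, -(f 3 + x * (x * p + y * r)) = w * g7 ∧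
      f 4 + x * (x * q + y * s) = z * g7 :=
    hv.exists_of_mul_eq_mul (j := 2) (k := 3) (by decide)
      (show z * -(f 3 + x * (x * p + y * r)) = w * (f 4 + x * (x * q + y * s)) by
        linear_combination hxt)
  refine ⟨![g0, -p, -q, 0, -r, -s, 0, g7], ?_⟩
  ext i
  fin_cases i
  exacts [show -(y * g0) - w * z * -p - w ^ 2 * -q = f 0 by linear_combination h0,
    show x * g0 - y * z ^ 2 * 0 - w * z * -r - w ^ 2 * -s = f 1 by linear_combination -h1,
    show x * 0 - w * 0 = f 2 by linear_combination -hf2,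
    show x ^ 2 * -p + x * y * -r + y ^ 2 * z * 0 - w * g7 = f 3 by linear_combination h3,
    show x ^ 2 * -q + x * y * -s + z * g7 = f 4 by linear_combination -h4]

theorem exact_d2_d1 (hv : IsPermutablyRegular ![x, y, z, w]) :
    Function.Exact (d2 x y z w) (d1 x y z w) := by
  refine fun f => ⟨fun hf => ?_, by rintro ⟨g, rfl⟩; exact d1_d2 x y z w g⟩
  obtain ⟨a, b, hab⟩ := Ideal.mem_span_pair.1 (apply_two_mem_span_of_d1_eq_zero hv hf)
  let g : Fin 8 → R := ![0, 0, 0, a, 0, 0, -b, 0]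
  obtain ⟨g', hg'⟩ : ∃ g', d2 x y z w g' = f - d2 x y z w g := by
    refine exists_d2_eq_of_apply_two_eq_zero hv (by rw [map_sub, hf, d1_d2, sub_zero]) ?_
    change f 2 - (x * a - w * -b) = 0
    linear_combination -hab
  exact ⟨g' + g, by rw [map_add, hg', sub_add_cancel]⟩

end Katthan

open Katthan in
theorem stmt_10_general {R : Type*} [CommRing R] {x y z w : R}
    (hv : IsPermutablyRegular ![x, y, z, w]) :
    Function.Injective (d4 x y z w) ∧
    Function.Exact (d4 x y z w) (d3 x y z w) ∧
    Function.Exact (d3 x y z w) (d2 x y z w) ∧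
    Function.Exact (d2 x y z w) (d1 x y z w) ∧
    LinearMap.range (d1 x y z w) = Ideal.span {x ^ 2, x * y, y ^ 2 * z ^ 2, z * w, w ^ 2} :=
  ⟨d4_injective (hv.isLeftRegular 0), exact_d4_d3 hv, exact_d3_d2 hv, exact_d2_d1 hv,
    range_d1 x y z w⟩

/-- Example 4.3, Katthän's example: over `O = K[x,y,z,w]`,
with `I = (x², xy, y²z², zw, w²)`, the explicit complex
`0 → O → O⁵ → O⁸ → O⁵ → O` described below (free modules of ranks 1, 5, 8, 5 in
homological degrees 4, 3, 2, 1, with bases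
`π^{abde}`; `π^{abd}, π^{abe}, π^{ade}, π^{bde}, π^{bcd}`;
`π^{ab}, π^{ad}, π^{ae}, π^{bc}, π^{bd}, π^{be}, π^{cd}, π^{de}`;
`π^a, π^b, π^c, π^d, π^e`) has vanishing consecutive compositions, `d₄` is
injective, `ker d₃ = im d₄`, `ker d₂ = im d₃`, `ker d₁ = im d₂`, and
`im d₁ = I`; hence it is a free `O`-module resolution of `O/I` of length
four. -/
theorem stmt_10 (K : Type*) [Field K] :
    let O := MvPolynomial (Fin 4) K
    let x : O := MvPolynomial.X 0
    let y : O := MvPolynomial.X 1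
    let z : O := MvPolynomial.X 2
    let w : O := MvPolynomial.X 3
    let I : Ideal O := Ideal.span {x ^ 2, x * y, y ^ 2 * z ^ 2, z * w, w ^ 2}
    -- d₁ on the basis `π^a, π^b, π^c, π^d, π^e`
    let d1 : (Fin 5 → O) → O := fun f =>
      f 0 * x ^ 2 + f 1 * (x * y) + f 2 * (y ^ 2 * z ^ 2) + f 3 * (z * w) + f 4 * w ^ 2
    -- d₂ on the basis `π^{ab}, π^{ad}, π^{ae}, π^{bc}, π^{bd}, π^{be}, π^{cd}, π^{de}`
    let d2 : (Fin 8 → O) → (Fin 5 → O) := fun g =>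
      ![-(y * g 0) - w * z * g 1 - w ^ 2 * g 2,
        x * g 0 - y * z ^ 2 * g 3 - w * z * g 4 - w ^ 2 * g 5,
        x * g 3 - w * g 6,
        x ^ 2 * g 1 + x * y * g 4 + y ^ 2 * z * g 6 - w * g 7,
        x ^ 2 * g 2 + x * y * g 5 + z * g 7]
    -- d₃ on the basis `π^{abd}, π^{abe}, π^{ade}, π^{bde}, π^{bcd}`
    let d3 : (Fin 5 → O) → (Fin 8 → O) := fun h =>
      ![w * z * h 0 + w ^ 2 * h 1,
        -(y * h 0) + w * h 2,
        -(y * h 1) - z * h 2,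
        w * h 4,
        x * h 0 + w * h 3 - y * z * h 4,
        x * h 1 - z * h 3,
        x * h 4,
        x ^ 2 * h 2 + x * y * h 3]
    -- d₄ on the basis `π^{abde}`
    let d4 : O → (Fin 5 → O) := fun p => ![-(w * p), z * p, -(y * p), x * p, 0]
    (∀ g, d1 (d2 g) = 0) ∧
    (∀ h, d2 (d3 h) = 0) ∧
    (∀ p, d3 (d4 p) = 0) ∧
    Function.Injective d4 ∧
    (∀ h, d3 h = 0 ↔ ∃ p, d4 p = h) ∧
    (∀ g, d2 g = 0 ↔ ∃ h, d3 h = g) ∧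
    (∀ f, d1 f = 0 ↔ ∃ g, d2 g = f) ∧
    (∀ p, (∃ f, d1 f = p) ↔ p ∈ I) := by
  intro O x y z w I d1 d2 d3 d4
  have hv : IsPermutablyRegular ![x, y, z, w] := by
    convert isPermutablyRegular_X (Fin 4) K using 1
    ext1 i
    fin_cases i <;> rfl
  obtain ⟨hinj, h43, h32, h21, hrange⟩ := stmt_10_general hv
  exact ⟨h21.apply_apply_eq_zero, h32.apply_apply_eq_zero, h43.apply_apply_eq_zero, hinj,
    h43, h32, h21, fun p => SetLike.ext_iff.1 hrange p⟩
end
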